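/- arXiv:2503.12429 — 7 statements merged into one kernel-verified Lean document; each statement's English description precedes it below -/
import Mathlib

section
/- Let 𝒜 be a Frobenius abelian category and f : M → N a morphism in 𝒜. Then f is 0-Ext-invertible (i.e. the postcomposition map Ext^1(X,f) : Ext^1(X,M) → Ext^1(X,N) is bijective for every object X) if and only if there exist projective objects P and Q of 𝒜 and morphisms g₁ : Q → N, l : M → P, g₂ : Q → P such that the morphism M ⊕ Q → N ⊕ P given by the matrix [[f, g₁], [l, g₂]] (that is, with components f : M → N, g₁ : Q → N, l : M → P, g₂ : Q → P) is an isomorphism. -/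
/-!
Both directions rest on the fact that `Ext¹(X, -)` kills injective objects, hence, in the Frobenius
setting, projective ones.

If the matrix morphism `φ : M ⊞ Q ⟶ N ⊞ P` is an isomorphism, the corner `g : N ⟶ M` of `φ⁻¹`
satisfies `f ≫ g = 𝟙 - (M ⟶ P ⟶ M)` and `g ≫ f = 𝟙 - (N ⟶ Q ⟶ N)`, so `f` and `g` induce mutually
inverse maps on `Ext¹(X, -)` (`ext_comp_eq_self`).

Conversely, embed `M` into an injective object `P` by `l` and let `Q` be the cokernel of the
monomorphism `(f, l) : M ⟶ N ⊞ P`. Injectivity of `Ext¹(Q, f)` makes the class of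
`0 ⟶ M ⟶ N ⊞ P ⟶ Q ⟶ 0` vanish, so this sequence splits and `M ⊞ Q ≅ N ⊞ P`. Surjectivity of
`Ext¹(X, f)` together with the splitting forces `Ext¹(X, Q) = 0` for all `X`, so `Q` is injective
(`injective_of_ext_one_eq_zero`), hence projective.
-/

open CategoryTheory

universe w v u

open Abelian Limits

section

variable {C : Type u} [Category.{v} C] [Abelian C] [HasExt.{w} C]

/-- An endomorphism that differs from the identity by a map factoring through an injective object
acts as the identity on `Ext¹`. -/
lemma ext_comp_eq_self {X A J : C} [Injective J] (h : A ⟶ A) (a : A ⟶ J) (b : J ⟶ A)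
    (hab : h + a ≫ b = 𝟙 A) (e : Ext X A 1) :
    e.comp (Ext.mk₀ h) (add_zero 1) = e := by
  have h0 : e.comp (Ext.mk₀ (a ≫ b)) (add_zero 1) = 0 := by
    rw [← Ext.mk₀_comp_mk₀, ← Ext.comp_assoc_of_third_deg_zero,
      Ext.eq_zero_of_injective (e.comp (Ext.mk₀ a) (add_zero 1)), Ext.zero_comp]
  have h1 : e.comp (Ext.mk₀ (h + a ≫ b)) (add_zero 1) = e := by rw [hab, Ext.comp_mk₀_id]
  rwa [Ext.mk₀_add, Ext.comp_add, h0, add_zero] at h1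

/-- The obstruction to extending a map `A ⟶ I` along a monomorphism `i : A ⟶ B` is a class in
`Ext¹(coker i, I)`. -/
lemma injective_of_ext_one_eq_zero (I : C) (hI : ∀ (X : C) (e : Ext X I 1), e = 0) :
    Injective I where
  factors {A B} g i _ := by
    have hS : (ShortComplex.mk i (cokernel.π i) (by simp)).ShortExact :=
      { exact := ShortComplex.exact_cokernel i }
    obtain ⟨x, hx⟩ := Ext.contravariant_sequence_exact₁ hS I (Ext.mk₀ g) (n₁ := 1) rfl (hI _ _)
    obtain ⟨x, rfl⟩ := (Ext.mk₀_bijective _ _).2 x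
    refine ⟨x, (Ext.mk₀_bijective _ _).1 ?_⟩
    simpa using hx

/-- `Ext¹` into `N ⊞ P` is detected on `N` when `P` is injective. -/
lemma ext_biprod_ext_fst {X N P : C} [Injective P] (y y' : Ext X (N ⊞ P) 1)
    (h : y.comp (Ext.mk₀ biprod.fst) (add_zero 1) = y'.comp (Ext.mk₀ biprod.fst) (add_zero 1)) :
    y = y' := by
  have hh : ∀ z : Ext X (N ⊞ P) 1, (z.comp (Ext.mk₀ biprod.fst) (add_zero 1)).comp
      (Ext.mk₀ biprod.inl) (add_zero 1) = z := fun z => by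
    rw [Ext.comp_assoc_of_third_deg_zero, Ext.mk₀_comp_mk₀]
    exact ext_comp_eq_self _ biprod.snd biprod.inr biprod.total z
  rw [← hh y, h, hh y']

end

/-- In a Frobenius abelian category, a morphism `f : M ⟶ N` is
`0`-Ext-invertible (i.e. `Ext^1(X,f)` is bijective for every `X`) if and only if
there are projectives `P`, `Q` and morphisms `g₁ : Q ⟶ N`, `l : M ⟶ P`, `g₂ : Q ⟶ P`
such that the matrix morphism `[[f, g₁], [l, g₂]] : M ⊞ Q ⟶ N ⊞ P` is an isomorphism. -/
theorem stmt_1 {C : Type u} [Category.{v} C] [Abelian C] [HasExt.{w} C]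
    [EnoughProjectives C] [EnoughInjectives C]
    (hFrob : ∀ X : C, Projective X ↔ Injective X)
    {M N : C} (f : M ⟶ N) :
    (∀ X : C, Function.Bijective
        (fun e : Abelian.Ext X M 1 => e.comp (Abelian.Ext.mk₀ f) (add_zero 1))) ↔
      ∃ (P Q : C) (_ : Projective P) (_ : Projective Q)
        (g₁ : Q ⟶ N) (l : M ⟶ P) (g₂ : Q ⟶ P),
        IsIso (Limits.biprod.desc (Limits.biprod.lift f l) (Limits.biprod.lift g₁ g₂)) := by
  constructor
  · intro hf
    let l : M ⟶ Injective.under M := Injective.ι M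
    let i : M ⟶ N ⊞ Injective.under M := biprod.lift f l
    have hil : i ≫ biprod.snd = l := biprod.lift_snd _ _
    have hif : i ≫ biprod.fst = f := biprod.lift_fst _ _
    have : Mono (i ≫ biprod.snd) := by rw [hil]; infer_instance
    have : Mono i := mono_of_mono i biprod.snd
    let p := cokernel.π i
    have hip : i ≫ p = 0 := cokernel.condition i
    have hS : (ShortComplex.mk i p hip).ShortExact :=
      { exact := ShortComplex.exact_cokernel i }
    -- the extension class is killed by `i`, hence by `f = i ≫ fst`, so it vanishes
    have hcls : hS.extClass = 0 := (hf _).1 (by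
      change hS.extClass.comp (Ext.mk₀ f) (add_zero 1) = (0 : Ext _ M 1).comp _ _
      rw [Ext.zero_comp, ← hif, ← Ext.mk₀_comp_mk₀, ← Ext.comp_assoc_of_third_deg_zero]
      have := hS.extClass_comp
      dsimp at this
      rw [this, Ext.zero_comp])
    -- `𝟙 (cokernel i)` has zero connecting image, hence lifts to a section `s` of `p`
    obtain ⟨s, hs⟩ := Ext.covariant_sequence_exact₃ (cokernel i) hS (Ext.mk₀ (𝟙 _)) (n₁ := 1) rfl
      (by rw [hcls, Ext.comp_zero])
    obtain ⟨s, rfl⟩ := (Ext.mk₀_bijective _ _).2 s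
    have hsp : s ≫ p = 𝟙 (cokernel i) := (Ext.mk₀_bijective _ _).1 (by simpa using hs)
    -- `x = (x ∘ s) ∘ p`, and `x ∘ s` lifts along `i` because `Ext¹(X, f)` is surjective
    have hQ : Injective (cokernel i) := injective_of_ext_one_eq_zero _ fun X x => by
      obtain ⟨e, he⟩ := (hf X).2
        ((x.comp (Ext.mk₀ s) (add_zero 1)).comp (Ext.mk₀ biprod.fst) (add_zero 1))
      have he' : e.comp (Ext.mk₀ i) (add_zero 1) = x.comp (Ext.mk₀ s) (add_zero 1) := by
        apply ext_biprod_ext_fst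
        rw [← he, Ext.comp_assoc_of_third_deg_zero, Ext.mk₀_comp_mk₀, hif]
      rw [← Ext.comp_mk₀_id x, ← hsp, ← Ext.mk₀_comp_mk₀, ← Ext.comp_assoc_of_third_deg_zero,
        ← he', Ext.comp_assoc_of_third_deg_zero, Ext.mk₀_comp_mk₀, hip, Ext.mk₀_zero, Ext.comp_zero]
    refine ⟨Injective.under M, cokernel i, (hFrob _).2 inferInstance, (hFrob _).2 hQ,
      s ≫ biprod.fst, l, s ≫ biprod.snd, ?_⟩
    have hlift : biprod.lift (s ≫ biprod.fst) (s ≫ biprod.snd) = s := by ext <;> simp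
    rw [hlift]
    exact (ShortComplex.Splitting.ofExactOfSection _ hS.exact s hsp ‹_›).isoBinaryBiproduct.isIso_inv
  · rintro ⟨P, Q, hP, hQ, g₁, l, g₂, hφ⟩ X
    have := (hFrob P).1 hP
    have := (hFrob Q).1 hQ
    set φ := biprod.desc (biprod.lift f l) (biprod.lift g₁ g₂) with hφdef
    have hinl : biprod.inl ≫ φ = f ≫ biprod.inl + l ≫ biprod.inr := by
      ext <;> simp [hφdef]
    have hfst : φ ≫ biprod.fst = biprod.fst ≫ f + biprod.snd ≫ g₁ := by
      ext <;> simp [hφdef]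
    -- the stable inverse of `f`, a corner of the matrix of `φ⁻¹`
    let g : N ⟶ M := biprod.inl ≫ inv φ ≫ biprod.fst
    have hfg : f ≫ g + l ≫ (biprod.inr ≫ inv φ ≫ biprod.fst) = 𝟙 M := by
      have := congrArg (· ≫ inv φ ≫ biprod.fst) hinl
      simpa [g] using this.symm
    have hgf : g ≫ f + (biprod.inl ≫ inv φ ≫ biprod.snd) ≫ g₁ = 𝟙 N := by
      have := congrArg (biprod.inl ≫ inv φ ≫ ·) hfst
      simpa [g] using this.symm
    refine Function.bijective_iff_has_inverse.2
      ⟨fun e => e.comp (Ext.mk₀ g) (add_zero 1), fun e => ?_, fun e => ?_⟩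
    · dsimp only
      rw [Ext.comp_assoc_of_third_deg_zero, Ext.mk₀_comp_mk₀]
      exact ext_comp_eq_self _ _ _ hfg e
    · dsimp only
      rw [Ext.comp_assoc_of_third_deg_zero, Ext.mk₀_comp_mk₀]
      exact ext_comp_eq_self _ _ _ hgf e
end

section
/- Let 𝒜 be a Frobenius abelian category and f : M → N a 0-Ext-invertible morphism in 𝒜 (i.e. Ext^1(X,f) is bijective for every object X). Then there exists a morphism g : N → M such that both 1_M − g∘f and 1_N − f∘g factor through projective objects of 𝒜; in other words, f becomes an isomorphism in the stable category of 𝒜 obtained by killing morphisms that factor through projective objects. -/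
/-!
For a short exact sequence `0 ⟶ Z ⟶ I ⟶ W ⟶ 0` with `I` projective and injective, pushing out
its class in `Ext¹(W, Z)` along `a : Z ⟶ Y` yields zero exactly when `a` extends to `I`, and every
class in `Ext¹(W, Y)` arises in this way. Thus `Ext¹(W, Y)` is the group of stable morphisms from
`Z` to `Y`, and the statement becomes the Yoneda lemma in the stable category: the surjectivity of
`Ext¹(L, f)`, for `N` embedded in an injective with cokernel `L`, provides `g` with `g ≫ f` stably equal to `𝟙 N`, and the
injectivity of `Ext¹(K, f)`, with `K` obtained likewise from `M`, cancels `f` in the stable equality `f ≫ g ≫ f = f`.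
-/

open CategoryTheory

universe w v u

open Abelian in
/-- The contravariant long exact sequence in degrees `0` and `1`: a morphism whose pushout of the
extension splits extends to the middle term. -/
lemma exists_extension_of_extClass_comp_eq_zero {C : Type u} [Category.{v} C] [Abelian C]
    [HasExt.{w} C] {S : ShortComplex C} (hS : S.ShortExact) {Y : C} (a : S.X₁ ⟶ Y)
    (ha : hS.extClass.comp (Ext.mk₀ a) (add_zero 1) = 0) : ∃ b : S.X₂ ⟶ Y, S.f ≫ b = a := by
  obtain ⟨x, hx⟩ := Ext.contravariant_sequence_exact₁ hS Y (Ext.mk₀ a) (add_zero 1) ha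
  obtain ⟨b, rfl⟩ := (Ext.mk₀_bijective _ _).2 x
  refine ⟨b, (Ext.mk₀_bijective _ _).1 ?_⟩
  rw [← hx, Ext.mk₀_comp_mk₀]

open Abelian in
/-- Dimension shifting: over a projective middle term, every extension of `S.X₃` is a pushout of
the given one. -/
lemma exists_eq_extClass_comp {C : Type u} [Category.{v} C] [Abelian C]
    [HasExt.{w} C] {S : ShortComplex C} (hS : S.ShortExact) [Projective S.X₂] {Y : C}
    (e : Ext S.X₃ Y 1) :
    ∃ a : S.X₁ ⟶ Y, hS.extClass.comp (Ext.mk₀ a) (add_zero 1) = e := by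
  obtain ⟨x, hx⟩ := Ext.contravariant_sequence_exact₃ hS Y e (Ext.eq_zero_of_projective _)
    (add_zero 1)
  obtain ⟨a, rfl⟩ := (Ext.mk₀_bijective _ _).2 x
  exact ⟨a, hx⟩

/-- The canonical sequence `0 ⟶ Z ⟶ I ⟶ W ⟶ 0` with `I` injective. -/
lemma exists_shortExact_injective {C : Type u} [Category.{v} C] [Abelian C] [EnoughInjectives C]
    (Z : C) : ∃ (I W : C) (i : Z ⟶ I) (p : I ⟶ W) (h : i ≫ p = 0),
      Injective I ∧ (ShortComplex.mk i p h).ShortExact :=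
  ⟨Injective.under Z, _, Injective.ι Z, Limits.cokernel.π _, Limits.cokernel.condition _,
    inferInstance, { exact := ShortComplex.exact_cokernel _ }⟩

/-- In a Frobenius abelian category, any `0`-Ext-invertible morphism
`f : M ⟶ N` admits a stable inverse `g : N ⟶ M`: both `1_M - g∘f` and `1_N - f∘g`
factor through projective objects. -/
theorem stmt_2 {C : Type u} [Category.{v} C] [Abelian C] [HasExt.{w} C]
    [EnoughProjectives C] [EnoughInjectives C]
    (hFrob : ∀ X : C, Projective X ↔ Injective X)
    {M N : C} (f : M ⟶ N)
    (hf : ∀ X : C, Function.Bijective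
        (fun e : Abelian.Ext X M 1 => e.comp (Abelian.Ext.mk₀ f) (add_zero 1))) :
    ∃ g : N ⟶ M,
      (∃ (P : C) (_ : Projective P) (u : M ⟶ P) (v : P ⟶ M),
          u ≫ v = 𝟙 M - f ≫ g) ∧
      (∃ (Q : C) (_ : Projective Q) (u : N ⟶ Q) (v : Q ⟶ N),
          u ≫ v = 𝟙 N - g ≫ f) := by
  obtain ⟨I, L, i, p, hip, hI, hS⟩ := exists_shortExact_injective N
  obtain ⟨J, K, j, q, hjq, hJ, hT⟩ := exists_shortExact_injective M
  have hIp : Projective I := (hFrob I).2 hI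
  have hJp : Projective J := (hFrob J).2 hJ
  obtain ⟨e, he⟩ := (hf L).2 hS.extClass
  obtain ⟨g, rfl⟩ := exists_eq_extClass_comp hS e
  obtain ⟨v, hv⟩ : ∃ v : I ⟶ N, i ≫ v = 𝟙 N - g ≫ f := by
    apply exists_extension_of_extClass_comp_eq_zero hS
    dsimp at he ⊢
    rw [Abelian.Ext.comp_assoc_of_third_deg_zero, Abelian.Ext.mk₀_comp_mk₀] at he
    rw [sub_eq_add_neg, Abelian.Ext.mk₀_add, Abelian.Ext.mk₀_neg, Abelian.Ext.comp_add,
      Abelian.Ext.comp_neg, he, Abelian.Ext.comp_mk₀_id, add_neg_cancel]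
  obtain ⟨w, hw⟩ : ∃ w : J ⟶ M, j ≫ w = 𝟙 M - f ≫ g := by
    apply exists_extension_of_extClass_comp_eq_zero hT
    apply (hf K).1
    -- The difference `f - f ≫ g ≫ f` factors through `I`, and `Ext¹(K, I) = 0`.
    have hfac : (𝟙 M - f ≫ g) ≫ f = (f ≫ i) ≫ v := by
      rw [Category.assoc, hv]; simp
    dsimp
    rw [Abelian.Ext.zero_comp, Abelian.Ext.comp_assoc_of_third_deg_zero,
      Abelian.Ext.mk₀_comp_mk₀, hfac, ← Abelian.Ext.mk₀_comp_mk₀,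
      ← Abelian.Ext.comp_assoc_of_third_deg_zero,
      Abelian.Ext.eq_zero_of_injective (hT.extClass.comp _ _), Abelian.Ext.zero_comp]
  exact ⟨g, ⟨J, hJp, j, w, hw⟩, ⟨I, hIp, i, v, hv⟩⟩
end

section
/- Let 𝒜 be an abelian category with enough projectives and f : M → N a morphism in 𝒜. Then the precomposition map Ext^1(f,Y) : Ext^1(N,Y) → Ext^1(M,Y) is zero for every object Y of 𝒜 if and only if f factors through a projective object of 𝒜. -/
/-! The nontrivial direction tests the hypothesis on a single universal class. Choose an epimorphism
`π : P ⟶ N` with `P` projective and kernel `K`, and let `δ : Ext N K 1` be the class of the short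
exact sequence `0 ⟶ K ⟶ P ⟶ N ⟶ 0`. By the long exact sequence for `Ext M -`, the pullback of `δ`
along `f` is the obstruction to lifting `f` through `π`; if it vanishes, `f` factors through `P`.
Conversely, if `f` factors through a projective object `P`, then `Ext^1(f, Y)` factors through
`Ext P Y 1 = 0`.
-/

open CategoryTheory

universe w v u

/-- In an abelian category with enough projectives, the precomposition map
`Ext^1(f,Y)` is zero for every object `Y` if and only if `f` factors through a
projective object. -/
theorem stmt_3 {C : Type u} [Category.{v} C] [Abelian C] [HasExt.{w} C]
    [EnoughProjectives C]
    {M N : C} (f : M ⟶ N) :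
    (∀ (Y : C) (e : Abelian.Ext N Y 1),
        (Abelian.Ext.mk₀ f).comp e (zero_add 1) = 0) ↔
      ∃ (P : C) (_ : Projective P) (g : M ⟶ P) (h : P ⟶ N), g ≫ h = f := by
  constructor
  · intro hf
    let S : ShortComplex C :=
      ShortComplex.mk (Limits.kernel.ι (Projective.π N)) (Projective.π N)
        (Limits.kernel.condition _)
    have hS : S.ShortExact :=
      { exact := S.exact_of_f_is_kernel (Limits.kernelIsKernel _)
        mono_f := inferInstanceAs (Mono (Limits.kernel.ι (Projective.π N)))
        epi_g := inferInstanceAs (Epi (Projective.π N)) }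
    obtain ⟨x, hx⟩ := Abelian.Ext.covariant_sequence_exact₃ M hS (Abelian.Ext.mk₀ f)
      (zero_add 1) (hf S.X₁ hS.extClass)
    -- The lift lives in `Ext M P 0`, so it comes from an actual morphism `M ⟶ P`.
    obtain ⟨g, rfl⟩ := (Abelian.Ext.mk₀_bijective M S.X₂).2 x
    rw [Abelian.Ext.mk₀_comp_mk₀] at hx
    exact ⟨Projective.over N, inferInstance, g, Projective.π N,
      (Abelian.Ext.mk₀_bijective M N).1 hx⟩
  · rintro ⟨P, _, g, h, rfl⟩ Y e
    rw [← Abelian.Ext.mk₀_comp_mk₀_assoc,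
      Abelian.Ext.eq_zero_of_projective ((Abelian.Ext.mk₀ h).comp e (zero_add 1)),
      Abelian.Ext.comp_zero]
end

section
/- Let 𝒜 be an abelian category with enough injectives, n ≥ 0 an integer, and f : M → N a morphism such that the precomposition map Ext^{n+1}(f,K) : Ext^{n+1}(N,K) → Ext^{n+1}(M,K) is zero for every object K. Then the precomposition map Ext^{n+2}(f,K) : Ext^{n+2}(N,K) → Ext^{n+2}(M,K) is zero for every object K. -/
open CategoryTheory

universe w v u

/-- In an abelian category with enough injectives, if the precomposition
map `Ext^{n+1}(f,K)` vanishes for every `K`, then so does `Ext^{n+2}(f,K)`. -/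
theorem stmt_6 {C : Type u} [Category.{v} C] [Abelian C] [HasExt.{w} C]
    [EnoughInjectives C]
    (n : ℕ) {M N : C} (f : M ⟶ N)
    (hf : ∀ (K : C) (e : Abelian.Ext N K (n + 1)),
        (Abelian.Ext.mk₀ f).comp e (zero_add (n + 1)) = 0) :
    ∀ (K : C) (e : Abelian.Ext N K (n + 2)),
      (Abelian.Ext.mk₀ f).comp e (zero_add (n + 2)) = 0 := by
  intro K e
  -- Embed `K` in an injective `I`; by dimension shifting along `0 → K → I → I/K → 0`,
  -- `e` is the Yoneda product of a class in `Ext^{n+1}(N, I/K)` with the class of this extension.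
  let S := ShortComplex.mk _ _ (Limits.cokernel.condition (Injective.ι K))
  have hS : S.ShortExact :=
    { exact := ShortComplex.exact_of_g_is_cokernel _ (Limits.cokernelIsCokernel S.f) }
  obtain ⟨x, hx⟩ := Abelian.Ext.covariant_sequence_exact₁ N hS e
    (Abelian.Ext.eq_zero_of_injective (n := n + 1) _) (n₀ := n + 1) rfl
  rw [← hx, ← Abelian.Ext.comp_assoc _ _ _ (zero_add (n + 1)) _ (by lia), hf,
    Abelian.Ext.zero_comp]
end

section
/- Let 𝒜 be an abelian category with enough projectives, n ≥ 0 an integer, and f : M → N a morphism such that the postcomposition map Ext^{n+1}(X,f) : Ext^{n+1}(X,M) → Ext^{n+1}(X,N) is zero for every object X. Then the postcomposition map Ext^{n+2}(X,f) : Ext^{n+2}(X,M) → Ext^{n+2}(X,N) is zero for every object X. -/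
open CategoryTheory Limits

universe w v u

/-- In an abelian category with enough projectives, if the postcomposition
map `Ext^{n+1}(X,f)` vanishes for every `X`, then so does `Ext^{n+2}(X,f)`. -/
theorem stmt_7 {C : Type u} [Category.{v} C] [Abelian C] [HasExt.{w} C]
    [EnoughProjectives C]
    (n : ℕ) {M N : C} (f : M ⟶ N)
    (hf : ∀ (X : C) (e : Abelian.Ext X M (n + 1)),
        e.comp (Abelian.Ext.mk₀ f) (add_zero (n + 1)) = 0) :
    ∀ (X : C) (e : Abelian.Ext X M (n + 2)),
      e.comp (Abelian.Ext.mk₀ f) (add_zero (n + 2)) = 0 := by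
  intro X e
  let S := ShortComplex.mk _ _ (kernel.condition (Projective.π X))
  have hS : S.ShortExact :=
    { exact := ShortComplex.exact_of_f_is_kernel _ (kernelIsKernel (Projective.π X)) }
  -- The pullback of `e` to the projective object `S.X₂` vanishes, so `e` factors through the
  -- class of `S`.
  obtain ⟨x, rfl⟩ := Abelian.Ext.contravariant_sequence_exact₃ hS M e
    (Abelian.Ext.eq_zero_of_projective (P := Projective.over X) (n := n + 1) _)
    (n₀ := n + 1) (by lia)
  rw [Abelian.Ext.comp_assoc_of_third_deg_zero, hf, Abelian.Ext.comp_zero]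
end

section
/- Let 𝒜 be an abelian category, f : M → N a morphism, and fix a syzygy ladder for f with short exact sequences 0 → ΩM → P → M → 0 and 0 → ΩN → Q → N → 0, where P and Q are projective objects, and with top morphism f′ : ΩM → ΩN. If f factors through a projective object of 𝒜, then f′ factors through a projective object of 𝒜. -/
open CategoryTheory

universe v u

/-- Given a syzygy ladder for `f : M ⟶ N` with `P` and `Q` projective,
if `f` factors through a projective object then so does the top morphism `f'`. -/
theorem stmt_8 {C : Type u} [Category.{v} C] [Abelian C]
    {M N ΩM ΩN P Q : C} (f : M ⟶ N)
    (i : ΩM ⟶ P) (π : P ⟶ M) (hw₁ : i ≫ π = 0)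
    (hse₁ : (ShortComplex.mk i π hw₁).ShortExact)
    (j : ΩN ⟶ Q) (ρ : Q ⟶ N) (hw₂ : j ≫ ρ = 0)
    (hse₂ : (ShortComplex.mk j ρ hw₂).ShortExact)
    (hP : Projective P) (hQ : Projective Q)
    (f' : ΩM ⟶ ΩN) (p : P ⟶ Q)
    (hcomm₁ : p ≫ ρ = π ≫ f) (hcomm₂ : i ≫ p = f' ≫ j)
    (hf : ∃ (R : C) (_ : Projective R) (g : M ⟶ R) (h : R ⟶ N), g ≫ h = f) :
    ∃ (R : C) (_ : Projective R) (g : ΩM ⟶ R) (h : R ⟶ ΩN), g ≫ h = f' := by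
  obtain ⟨R, _, g, h, rfl⟩ := hf
  have : Mono j := hse₂.mono_f
  have : Epi ρ := hse₂.epi_g
  -- Lift `h` through `ρ`; then `p - π ≫ g ≫ h'` is killed by `ρ`, so it factors through `j` as `k`.
  -- Since `i ≫ π = 0`, restricting to `ΩM` gives `i ≫ k = f'`, so `f'` factors through `P`.
  have hk : (p - π ≫ g ≫ Projective.factorThru h ρ) ≫ ρ = 0 := by
    simp [Preadditive.sub_comp, hcomm₁]
  obtain ⟨k, hkj⟩ : ∃ k : P ⟶ ΩN, k ≫ j = p - π ≫ g ≫ Projective.factorThru h ρ :=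
    ⟨hse₂.exact.lift _ hk, hse₂.exact.lift_f _ hk⟩
  refine ⟨P, hP, i, k, ?_⟩
  rw [← cancel_mono j, Category.assoc, hkj, Preadditive.comp_sub, reassoc_of% hw₁, hcomm₂]
  simp
end

section
/- Let 𝒜 be a Frobenius abelian category and f : M → N a 0-Ext-invertible morphism (i.e. Ext^1(X,f) is bijective for every object X). Fix a syzygy ladder for f with short exact sequences 0 → ΩM → P → M → 0 and 0 → ΩN → Q → N → 0, where P and Q are projective, and with top morphism f′ : ΩM → ΩN. Then there exists a morphism g′ : ΩN → ΩM such that both 1_{ΩM} − g′∘f′ and 1_{ΩN} − f′∘g′ factor through projective objects of 𝒜; in other words, the syzygy of a 0-Ext-invertible morphism is an isomorphism in the stable category. -/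
/-!
The morphism `f` is already an isomorphism in the stable category, and syzygies of stable
isomorphisms are stable isomorphisms.

For the first point, embed `W` in an injective `I` with cokernel `X`. As `I` is also projective,
`Ext¹(I, M) = 0`, so the long exact sequence identifies `Ext¹(X, M)` with `Hom(W, M)`
modulo the morphisms which factor through `W ⟶ I` (`extClass_comp_eq_iff`, `exists_extClass_comp_eq`). Taking `W = N`, surjectivity
of `Ext¹(X, f)` gives a right inverse `g` of `f` up to injectives; taking `W = M`, injectivity
shows that `g` is also a left inverse (`exists_stable_inverse`).

For the second point, lift `g` to the syzygies. The endomorphisms `1 - f' ≫ g'` and `1 - g' ≫ f'`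
are then syzygies of endomorphisms factoring through projectives, so they factor through
`P` and `Q` respectively (`syzygy_factors`).
-/

open CategoryTheory

universe w v u

namespace FrobeniusSyzygy

variable {C : Type u} [Category.{v} C] [Abelian C]

/-- Two morphisms push the class of `S` in `Ext¹(X₃, X₁)` forward to the same class exactly when
their difference factors through `X₁ ⟶ X₂`. -/
lemma extClass_comp_eq_iff [HasExt.{w} C] {S : ShortComplex C} (hS : S.ShortExact)
    {M : C} (h h' : S.X₁ ⟶ M) :
    hS.extClass.comp (Abelian.Ext.mk₀ h) (add_zero 1) =
      hS.extClass.comp (Abelian.Ext.mk₀ h') (add_zero 1) ↔ ∃ k : S.X₂ ⟶ M, h = S.f ≫ k + h' := by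
  constructor
  · intro e
    have e' : hS.extClass.comp (Abelian.Ext.mk₀ (h - h')) (add_zero 1) = 0 := by
      have := Abelian.Ext.comp_add hS.extClass (Abelian.Ext.mk₀ (h - h')) (Abelian.Ext.mk₀ h')
        (add_zero 1)
      rw [← Abelian.Ext.mk₀_add, sub_add_cancel, e] at this
      exact right_eq_add.mp this
    obtain ⟨x, hx⟩ := Abelian.Ext.contravariant_sequence_exact₁ hS M _ (add_zero 1) e'
    obtain ⟨k, rfl⟩ := (Abelian.Ext.mk₀_bijective _ _).2 x
    rw [Abelian.Ext.mk₀_comp_mk₀] at hx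
    exact ⟨k, by rw [(Abelian.Ext.mk₀_bijective _ _).1 hx, sub_add_cancel]⟩
  · rintro ⟨k, rfl⟩
    rw [Abelian.Ext.mk₀_add, Abelian.Ext.comp_add, ← Abelian.Ext.mk₀_comp_mk₀,
      hS.extClass_comp_assoc, zero_add]

/-- With `X₂` projective, every class in `Ext¹(X₃, M)` is a pushout of the class of `S`. -/
lemma exists_extClass_comp_eq [HasExt.{w} C] {S : ShortComplex C} (hS : S.ShortExact)
    {M : C} [Projective S.X₂] (e : Abelian.Ext S.X₃ M 1) :
    ∃ g : S.X₁ ⟶ M, hS.extClass.comp (Abelian.Ext.mk₀ g) (add_zero 1) = e := by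
  obtain ⟨x, hx⟩ := Abelian.Ext.contravariant_sequence_exact₃ hS M e
    (Abelian.Ext.eq_zero_of_projective _) (add_zero 1)
  obtain ⟨g, rfl⟩ := (Abelian.Ext.mk₀_bijective _ _).2 x
  exact ⟨g, hx⟩

/-- An embedding into an injective, completed to a short exact sequence. -/
lemma exists_cosyzygy [EnoughInjectives C] (W : C) :
    ∃ (I X : C) (a : W ⟶ I) (b : I ⟶ X) (w : a ≫ b = 0),
      Injective I ∧ (ShortComplex.mk a b w).ShortExact := by
  refine ⟨Injective.under W, Limits.cokernel (Injective.ι W), Injective.ι W,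
    Limits.cokernel.π _, Limits.cokernel.condition _, inferInstance, ?_⟩
  exact { exact := ShortComplex.exact_cokernel _
          mono_f := by dsimp; infer_instance
          epi_g := by dsimp; infer_instance }

/-- A `0`-Ext-invertible morphism is an isomorphism in the stable category. -/
lemma exists_stable_inverse [HasExt.{w} C] [EnoughInjectives C]
    (hFrob : ∀ X : C, Projective X ↔ Injective X) {M N : C} (f : M ⟶ N)
    (hf : ∀ X : C, Function.Bijective
        (fun e : Abelian.Ext X M 1 => e.comp (Abelian.Ext.mk₀ f) (add_zero 1))) :
    ∃ g : N ⟶ M,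
      (∃ (I : C) (_ : Projective I) (s : M ⟶ I) (t : I ⟶ M), 𝟙 M = s ≫ t + f ≫ g) ∧
      (∃ (I : C) (_ : Projective I) (s : N ⟶ I) (t : I ⟶ N), 𝟙 N = s ≫ t + g ≫ f) := by
  obtain ⟨I, X, a, b, w, hI, hS⟩ := exists_cosyzygy N
  obtain ⟨I', X', a', b', w', hI', hS'⟩ := exists_cosyzygy M
  have hPI : Projective (ShortComplex.mk a b w).X₂ := (hFrob I).2 hI
  obtain ⟨e, he⟩ := (hf X).2 hS.extClass
  obtain ⟨g, hg⟩ := exists_extClass_comp_eq hS e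
  obtain ⟨k, hk⟩ : ∃ k : I ⟶ N, 𝟙 N = a ≫ k + g ≫ f := by
    refine (extClass_comp_eq_iff hS (𝟙 N) (g ≫ f)).1 ?_
    rw [Abelian.Ext.comp_mk₀_id, ← Abelian.Ext.mk₀_comp_mk₀,
      ← Abelian.Ext.comp_assoc_of_third_deg_zero]
    exact he.symm.trans (by rw [hg])
  have : Mono a' := hS'.mono_f
  refine ⟨g, ⟨I', (hFrob I').2 hI', a', ?_⟩, ⟨I, hPI, a, k, hk⟩⟩
  refine (extClass_comp_eq_iff hS' (𝟙 M) (f ≫ g)).1 ((hf X').1 ?_)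
  dsimp only
  rw [Abelian.Ext.comp_assoc_of_third_deg_zero, Abelian.Ext.comp_assoc_of_third_deg_zero,
    Abelian.Ext.mk₀_comp_mk₀, Abelian.Ext.mk₀_comp_mk₀]
  -- `f - f ≫ g ≫ f` factors through the injective `I`, hence extends along `M ⟶ I'`.
  refine (extClass_comp_eq_iff hS' _ _).2 ⟨Injective.factorThru (f ≫ a) a' ≫ k, ?_⟩
  dsimp only
  rw [Injective.comp_factorThru_assoc, Category.id_comp, Category.assoc, Category.assoc,
    ← Preadditive.comp_add, ← hk, Category.comp_id]

/-- An endomorphism of a short exact sequence whose action on the quotient factors through a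
projective is, on the subobject, a morphism factoring through the middle term. -/
lemma syzygy_factors {ΩM P M I : C} (i : ΩM ⟶ P) (π : P ⟶ M) (w : i ≫ π = 0)
    (hS : (ShortComplex.mk i π w).ShortExact) [Projective I]
    (φ : ΩM ⟶ ΩM) (Φ : P ⟶ P) (h₁ : i ≫ Φ = φ ≫ i) (s : M ⟶ I) (t : I ⟶ M)
    (h₂ : Φ ≫ π = π ≫ s ≫ t) : ∃ k : P ⟶ ΩM, i ≫ k = φ := by
  have : Epi π := hS.epi_g
  have : Mono i := hS.mono_f
  have : Mono (ShortComplex.mk i π w).f := hS.mono_f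
  -- Correcting `Φ` by a lift of `s ≫ t` makes it land in the kernel of `π`, without changing
  -- its restriction to `ΩM`.
  have h₃ : (Φ - π ≫ s ≫ Projective.factorThru t π) ≫ π = 0 := by
    simp [h₂]
  obtain ⟨k, hk⟩ : ∃ k : P ⟶ ΩM, k ≫ i = Φ - π ≫ s ≫ Projective.factorThru t π :=
    ⟨hS.exact.lift _ h₃, hS.exact.lift_f _ h₃⟩
  refine ⟨k, ?_⟩
  rw [← cancel_mono i, Category.assoc, hk, Preadditive.comp_sub, h₁, reassoc_of% w,
    Limits.zero_comp, sub_zero]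

end FrobeniusSyzygy

/-- In a Frobenius abelian category, the syzygy `f'` of a
`0`-Ext-invertible morphism `f` is an isomorphism in the stable category:
there is `g' : ΩN ⟶ ΩM` with `1 - f' ≫ g'` and `1 - g' ≫ f'` factoring
through projective objects. -/
theorem stmt_10 {C : Type u} [Category.{v} C] [Abelian C] [HasExt.{w} C]
    [EnoughProjectives C] [EnoughInjectives C]
    (hFrob : ∀ X : C, Projective X ↔ Injective X)
    {M N ΩM ΩN P Q : C} (f : M ⟶ N)
    (hf : ∀ X : C, Function.Bijective
        (fun e : Abelian.Ext X M 1 => e.comp (Abelian.Ext.mk₀ f) (add_zero 1)))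
    (i : ΩM ⟶ P) (π : P ⟶ M) (hw₁ : i ≫ π = 0)
    (hse₁ : (ShortComplex.mk i π hw₁).ShortExact)
    (j : ΩN ⟶ Q) (ρ : Q ⟶ N) (hw₂ : j ≫ ρ = 0)
    (hse₂ : (ShortComplex.mk j ρ hw₂).ShortExact)
    (hP : Projective P) (hQ : Projective Q)
    (f' : ΩM ⟶ ΩN) (p : P ⟶ Q)
    (hcomm₁ : p ≫ ρ = π ≫ f) (hcomm₂ : i ≫ p = f' ≫ j) :
    ∃ g' : ΩN ⟶ ΩM,
      (∃ (R : C) (_ : Projective R) (u : ΩM ⟶ R) (v : R ⟶ ΩM),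
          u ≫ v = 𝟙 ΩM - f' ≫ g') ∧
      (∃ (R : C) (_ : Projective R) (u : ΩN ⟶ R) (v : R ⟶ ΩN),
          u ≫ v = 𝟙 ΩN - g' ≫ f') := by
  obtain ⟨g, ⟨I₁, hI₁, s₁, t₁, e₁⟩, ⟨I₂, hI₂, s₂, t₂, e₂⟩⟩ :=
    FrobeniusSyzygy.exists_stable_inverse hFrob f hf
  have : Epi π := hse₁.epi_g
  have : Mono (ShortComplex.mk i π hw₁).f := hse₁.mono_f
  obtain ⟨q, hq⟩ : ∃ q : Q ⟶ P, q ≫ π = ρ ≫ g := ⟨Projective.factorThru (ρ ≫ g) π, by simp⟩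
  have h₀ : (j ≫ q) ≫ π = 0 := by rw [Category.assoc, hq, reassoc_of% hw₂, Limits.zero_comp]
  obtain ⟨g', hg'⟩ : ∃ g' : ΩN ⟶ ΩM, g' ≫ i = j ≫ q :=
    ⟨hse₁.exact.lift _ h₀, hse₁.exact.lift_f _ h₀⟩
  obtain ⟨k₁, hk₁⟩ := FrobeniusSyzygy.syzygy_factors i π hw₁ hse₁ (𝟙 ΩM - f' ≫ g') (𝟙 P - p ≫ q)
    (by simp [hg', reassoc_of% hcomm₂]) s₁ t₁
    (by simp [hq, reassoc_of% hcomm₁, eq_sub_of_add_eq e₁.symm])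
  obtain ⟨k₂, hk₂⟩ := FrobeniusSyzygy.syzygy_factors j ρ hw₂ hse₂ (𝟙 ΩN - g' ≫ f') (𝟙 Q - q ≫ p)
    (by simp [← hcomm₂, reassoc_of% hg']) s₂ t₂
    (by simp [hcomm₁, reassoc_of% hq, eq_sub_of_add_eq e₂.symm])
  exact ⟨g', ⟨P, hP, i, k₁, hk₁⟩, ⟨Q, hQ, j, k₂, hk₂⟩⟩
end
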